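/- arXiv:1705.07484 — 3 statements merged into one kernel-verified Lean document; each statement's English description precedes it below -/
import Mathlib

section
/- Suppose $\Lambda_1, \Lambda_2, \Lambda_3$ are real numbers each equal to $0$ or $1$, and $\Lambda_i^-, \Lambda_i^+$ are real numbers satisfying $\Lambda_i^- \leq \Lambda_i \leq \Lambda_i^+$ for $i = 1, 2, 3$. Then $\Lambda_1 \Lambda_2 \Lambda_3 \geq \Lambda_1^- \Lambda_2^+ \Lambda_3^+ + \Lambda_1^+ \Lambda_2^- \Lambda_3^+ + \Lambda_1^+ \Lambda_2^+ \Lambda_3^- - 2\,\Lambda_1^+ \Lambda_2^+ \Lambda_3^+$. -/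
/-! The inequality has an analogue for any number of nonnegative factors, which goes by induction:
when a factor with `m ≤ a ≤ p` is adjoined to a family with `∏ aᵢ = A` and `∏ pᵢ = P`, the terms
that remain after the induction hypothesis combine to `(p - a) * (P - A) ≥ 0`. -/

section ProductLowerBound

variable {ι R : Type*} [DecidableEq ι]

theorem sum_prod_update_insert [CommSemiring R] {s : Finset ι} {k : ι} (hk : k ∉ s) (m p : ι → R) :
    ∑ i ∈ insert k s, ∏ j ∈ insert k s, Function.update p i (m i) j =
      m k * ∏ j ∈ s, p j + p k * ∑ i ∈ s, ∏ j ∈ s, Function.update p i (m i) j := by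
  have update_new : ∏ j ∈ insert k s, Function.update p k (m k) j = m k * ∏ j ∈ s, p j := by
    rw [Finset.prod_insert hk, Function.update_self, Finset.prod_update_of_notMem hk]
  have update_old : ∀ i ∈ s, ∏ j ∈ insert k s, Function.update p i (m i) j =
      p k * ∏ j ∈ s, Function.update p i (m i) j := fun i hi => by
    rw [Finset.prod_insert hk, Function.update_of_ne (ne_of_mem_of_not_mem hi hk).symm]
  rw [Finset.sum_insert hk, update_new, Finset.sum_congr rfl update_old, Finset.mul_sum]

theorem stmt_1_general [CommRing R] [PartialOrder R] [IsOrderedRing R] (s : Finset ι)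
    (a m p : ι → R) (ha : ∀ i ∈ s, 0 ≤ a i) (hm : ∀ i ∈ s, m i ≤ a i)
    (hp : ∀ i ∈ s, a i ≤ p i) :
    ∑ i ∈ s, ∏ j ∈ s, Function.update p i (m i) j - ((s.card : R) - 1) * ∏ j ∈ s, p j ≤
      ∏ j ∈ s, a j := by
  induction s using Finset.induction_on with
  | empty => simp
  | insert k s hk ih =>
    rw [Finset.forall_mem_insert] at ha hm hp
    rw [sum_prod_update_insert hk, Finset.card_insert_of_notMem hk, Finset.prod_insert hk,
      Finset.prod_insert hk, Nat.cast_succ]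
    set A := ∏ j ∈ s, a j
    set P := ∏ j ∈ s, p j
    set S := ∑ i ∈ s, ∏ j ∈ s, Function.update p i (m i) j
    have hAP : A ≤ P := Finset.prod_le_prod ha.2 hp.2
    have hP : 0 ≤ P := Finset.prod_nonneg fun i hi => (ha.2 i hi).trans (hp.2 i hi)
    have hpk : 0 ≤ p k := ha.1.trans hp.1
    have hS : S - ((s.card : R) - 1) * P ≤ A := ih ha.2 hm.2 hp.2
    calc m k * P + p k * S - ((s.card : R) + 1 - 1) * (p k * P)
        = m k * P + p k * (S - ((s.card : R) - 1) * P) - p k * P := by ring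
      _ ≤ a k * P + p k * A - p k * P := by gcongr; exact hm.1
      _ = a k * A - (p k - a k) * (P - A) := by ring
      _ ≤ a k * A := sub_le_self _ (mul_nonneg (sub_nonneg.2 hp.1) (sub_nonneg.2 hAP))

end ProductLowerBound

theorem stmt_1 (Λ₁ Λ₂ Λ₃ Λ₁m Λ₂m Λ₃m Λ₁p Λ₂p Λ₃p : ℝ)
    (h1 : Λ₁ = 0 ∨ Λ₁ = 1) (h2 : Λ₂ = 0 ∨ Λ₂ = 1) (h3 : Λ₃ = 0 ∨ Λ₃ = 1)
    (h1m : Λ₁m ≤ Λ₁) (h1p : Λ₁ ≤ Λ₁p)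
    (h2m : Λ₂m ≤ Λ₂) (h2p : Λ₂ ≤ Λ₂p)
    (h3m : Λ₃m ≤ Λ₃) (h3p : Λ₃ ≤ Λ₃p) :
    Λ₁ * Λ₂ * Λ₃ ≥
      Λ₁m * Λ₂p * Λ₃p + Λ₁p * Λ₂m * Λ₃p + Λ₁p * Λ₂p * Λ₃m - 2 * (Λ₁p * Λ₂p * Λ₃p) := by
  have nonneg : 0 ≤ Λ₁ ∧ 0 ≤ Λ₂ ∧ 0 ≤ Λ₃ := by grind
  have three_sub_one : (3 : ℝ) - 1 = 2 := by norm_num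
  simpa [Fin.sum_univ_three, Fin.prod_univ_three, Function.update_apply, three_sub_one] using
    stmt_1_general Finset.univ ![Λ₁, Λ₂, Λ₃] ![Λ₁m, Λ₂m, Λ₃m] ![Λ₁p, Λ₂p, Λ₃p]
      (by simpa [Fin.forall_fin_succ] using nonneg)
      (by simp [Fin.forall_fin_succ, *]) (by simp [Fin.forall_fin_succ, *])
end

section
/- Let $c$ and $\mu$ be fixed real numbers with $1 < c < \frac{17}{16}$ and $0 < \mu < 1$. There exists a constant $C = C(c, \mu) > 0$ such that for every real $X \geq 3$, every real $D$ with $2 \leq D \leq X$, every real $\Delta$ with $0 < \Delta \leq X^{1-c}$, and every sieve weight $\lambda$ of level $D$, one has $\int_{-\Delta}^{\Delta} |L(\alpha)|^2 \, d\alpha \leq C X^{2-c} (\log X)^6$. -/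
/-- `e(t) = e^{2πit}`. -/
noncomputable def e (t : ℝ) : ℂ := Complex.exp (2 * Real.pi * Complex.I * t)

/-- A sieve weight of level `D`. -/
def IsSieveWeight (D : ℝ) (lam : ℕ → ℝ) : Prop :=
  (∀ d : ℕ, |lam d| ≤ 1) ∧ ∀ d : ℕ, (D < (d : ℝ) ∨ 2 ∣ d ∨ ¬ Squarefree d) → lam d = 0

/-- The exponential sum `L(α)` over primes `μX < p ≤ X` with `p + 2 ≡ 0 (mod d)`. -/
noncomputable def L (c μ X D : ℝ) (lam : ℕ → ℝ) (α : ℝ) : ℂ :=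
  ∑ d ∈ Finset.range (⌊D⌋₊ + 1), (lam d : ℂ) *
    ∑ p ∈ (Finset.range (⌊X⌋₊ + 1)).filter
        (fun p : ℕ => p.Prime ∧ μ * X < (p : ℝ) ∧ d ∣ (p + 2)),
      (Real.log p : ℂ) * e (α * ⌊(p : ℝ) ^ c⌋)

/-!
Exchanging the two sums gives `L(α) = ∑ a_p e(α ⌊p^c⌋)` with `a_p = log p · ∑ λ(d)`, the inner sum
over `d ∣ p + 2`, so that `|a_p| ≤ log X · τ(p + 2)`. In the integral of `|L|²` a pair `p ≠ q`
contributes at most `|a_p a_q| / |⌊p^c⌋ - ⌊q^c⌋|`, and since `c ≥ 1` the frequencies are separated: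
`|⌊p^c⌋ - ⌊q^c⌋| ≥ (μX)^(c-1) |p - q| / 2`. Schur's test and the harmonic sum over `|p - q|` bound
the integral by `≪ X^(1-c) log X · ∑ a_p²`. For `∑ a_p²` primality can be forgotten:
`τ² ≤ τ * τ = ζ ^ 4` (Dirichlet convolution) yields `∑_{n ≤ N} τ(n)² ≤ N H_N³`, with `H_N` the
harmonic number, hence `∑ a_p² ≪ X (log X)^5`.
-/

/-! ### Second moment of the divisor function -/

section DivisorMoments

open Finset ArithmeticFunction
open scoped ArithmeticFunction.zeta ArithmeticFunction.sigma

theorem harmonic_cast_eq_sum_Ioc (N : ℕ) : (harmonic N : ℝ) = ∑ n ∈ Ioc 0 N, (n : ℝ)⁻¹ := by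
  rw [harmonic_eq_sum_Icc]
  push_cast
  rfl

theorem harmonic_cast_nonneg (N : ℕ) : (0 : ℝ) ≤ harmonic N := by
  rw [harmonic_cast_eq_sum_Ioc]
  positivity

theorem harmonic_cast_mono {M N : ℕ} (h : M ≤ N) : (harmonic M : ℝ) ≤ harmonic N := by
  simp only [harmonic_cast_eq_sum_Ioc]
  exact sum_le_sum_of_subset_of_nonneg (Ioc_subset_Ioc_right h) fun _ _ _ => by positivity

theorem mul_pdiv_id {K : Type*} [Semifield K] (f g : ArithmeticFunction K) :
    (f * g).pdiv ↑ArithmeticFunction.id =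
      f.pdiv ↑ArithmeticFunction.id * g.pdiv ↑ArithmeticFunction.id := by
  ext n
  simp only [pdiv_apply, mul_apply, natCoe_apply, id_apply, sum_div]
  refine sum_congr rfl fun x hx => ?_
  rw [← (Nat.mem_divisorsAntidiagonal.1 hx).1, Nat.cast_mul, mul_div_mul_comm]

theorem sum_Ioc_mul_div_le {f g : ArithmeticFunction ℝ} (hf : ∀ n, 0 ≤ f n) (hg : ∀ n, 0 ≤ g n)
    (N : ℕ) :
    ∑ n ∈ Ioc 0 N, (f * g) n / n ≤ (∑ n ∈ Ioc 0 N, f n / n) * ∑ n ∈ Ioc 0 N, g n / n := by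
  have weighted : ∀ n, (f * g) n / n =
      (f.pdiv ↑ArithmeticFunction.id * g.pdiv ↑ArithmeticFunction.id) n := fun n => by
    simp [← mul_pdiv_id]
  simp_rw [weighted]
  rw [sum_Ioc_mul_eq_sum_prod_filter, sum_mul_sum, ← sum_product']
  simp only [pdiv_apply, natCoe_apply, id_apply]
  exact sum_le_sum_of_subset_of_nonneg (filter_subset _ _) fun x _ _ =>
    mul_nonneg (div_nonneg (hf _) (Nat.cast_nonneg _)) (div_nonneg (hg _) (Nat.cast_nonneg _))

/-- The Dirichlet power `ζ ^ k` is the `k`-fold divisor function. -/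
theorem sum_Ioc_zeta_pow_div_le (k N : ℕ) :
    ∑ n ∈ Ioc 0 N, ((ζ ^ k) n : ℝ) / n ≤ (harmonic N : ℝ) ^ k := by
  have zeta_case : ∑ n ∈ Ioc 0 N, (ζ n : ℝ) / n = harmonic N := by
    rw [harmonic_cast_eq_sum_Ioc]
    refine sum_congr rfl fun n hn => ?_
    rw [zeta_apply_ne (mem_Ioc.1 hn).1.ne', Nat.cast_one, one_div]
  induction k with
  | zero =>
    simp only [pow_zero, one_apply, Nat.cast_ite, Nat.cast_one, Nat.cast_zero, ite_div, zero_div,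
      sum_ite_eq']
    split_ifs <;> norm_num
  | succ k ih =>
    have step := sum_Ioc_mul_div_le (f := ↑(ζ ^ k)) (g := ↑ζ)
      (fun n => Nat.cast_nonneg _) (fun n => Nat.cast_nonneg _) N
    rw [← natCoe_mul, ← pow_succ] at step
    simp only [natCoe_apply, zeta_case] at step
    rw [pow_succ (harmonic N : ℝ)]
    exact step.trans (mul_le_mul_of_nonneg_right ih (harmonic_cast_nonneg N))

theorem sum_Ioc_mul_zeta_le {f : ArithmeticFunction ℝ} (hf : ∀ n, 0 ≤ f n) (N : ℕ) :
    ∑ n ∈ Ioc 0 N, (f * ζ) n ≤ N * ∑ n ∈ Ioc 0 N, f n / n := by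
  rw [sum_Ioc_mul_zeta_eq_sum, mul_sum]
  refine sum_le_sum fun n _ => ?_
  calc f n * ((N / n : ℕ) : ℝ) ≤ f n * (N / n) :=
        mul_le_mul_of_nonneg_left Nat.cast_div_le (hf n)
    _ = N * (f n / n) := by ring

theorem sum_Ioc_zeta_pow_le (k N : ℕ) :
    ∑ n ∈ Ioc 0 N, ((ζ ^ (k + 1)) n : ℝ) ≤ N * (harmonic N : ℝ) ^ k := by
  have h := sum_Ioc_mul_zeta_le (f := ↑(ζ ^ k)) (fun n => Nat.cast_nonneg _) N
  rw [← natCoe_mul, ← pow_succ] at h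
  simp only [natCoe_apply] at h
  exact h.trans (mul_le_mul_of_nonneg_left (sum_Ioc_zeta_pow_div_le k N) (Nat.cast_nonneg N))

theorem zeta_sq_eq_sigma_zero : ζ ^ 2 = σ 0 := by
  rw [← zeta_mul_pow_eq_sigma, pow_zero_eq_zeta, sq]

theorem sigma_zero_mul_le (m n : ℕ) : σ 0 (m * n) ≤ σ 0 m * σ 0 n := by
  simp only [sigma_zero_apply, Nat.divisors_mul]
  exact card_mul_le

theorem sigma_zero_sq_le_zeta_pow_four (n : ℕ) : σ 0 n ^ 2 ≤ (ζ ^ 4) n := by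
  have sigma_zero_eq_card : σ 0 n = #n.divisorsAntidiagonal := by
    rw [sigma_zero_apply, ← Nat.map_div_right_divisors, card_map]
  calc σ 0 n ^ 2 = ∑ _x ∈ n.divisorsAntidiagonal, σ 0 n := by
        rw [sum_const, smul_eq_mul, ← sigma_zero_eq_card, sq]
    _ ≤ ∑ x ∈ n.divisorsAntidiagonal, σ 0 x.1 * σ 0 x.2 := sum_le_sum fun x hx => by
        simpa only [(Nat.mem_divisorsAntidiagonal.1 hx).1] using sigma_zero_mul_le x.1 x.2
    _ = (ζ ^ 4) n := by rw [← mul_apply, ← zeta_sq_eq_sigma_zero, ← pow_add]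

theorem sum_Ioc_sigma_zero_sq_le (N : ℕ) :
    ∑ n ∈ Ioc 0 N, (σ 0 n : ℝ) ^ 2 ≤ N * (harmonic N : ℝ) ^ 3 :=
  (sum_le_sum fun n _ => by exact_mod_cast sigma_zero_sq_le_zeta_pow_four n).trans
    (sum_Ioc_zeta_pow_le 3 N)

end DivisorMoments

/-! ### Mean squares of exponential sums with separated frequencies -/

section MeanSquare

open Finset
open scoped ComplexConjugate FourierTransform

theorem e_eq_fourierChar (t : ℝ) : e t = 𝐞 t := by
  rw [e, Real.fourierChar_apply]
  congr 1
  push_cast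
  ring

theorem norm_e (t : ℝ) : ‖e t‖ = 1 := by
  rw [e_eq_fourierChar, Circle.norm_coe]

theorem conj_e (t : ℝ) : conj (e t) = e (-t) := by
  rw [e_eq_fourierChar, e_eq_fourierChar, AddChar.map_neg_eq_inv, Circle.coe_inv_eq_conj]

theorem e_add (s t : ℝ) : e (s + t) = e s * e t := by
  simp only [e_eq_fourierChar, AddChar.map_add_eq_mul, Circle.coe_mul]

@[fun_prop]
theorem continuous_e : Continuous e := by
  unfold e
  fun_prop

theorem norm_integral_e_le_inv_abs (x y : ℝ) {m : ℝ} (hm : m ≠ 0) :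
    ‖∫ α in x..y, e (α * m)‖ ≤ |m|⁻¹ := by
  have e_eq_exp : ∀ α : ℝ, e (α * m) = Complex.exp ((2 * Real.pi * Complex.I * m) * α) := by
    intro α
    rw [e]
    congr 1
    push_cast
    ring
  have denominator_ne_zero : (2 * Real.pi * Complex.I * m : ℂ) ≠ 0 := by
    simp [Real.pi_ne_zero, hm]
  have norm_denominator : ‖(2 * Real.pi * Complex.I * m : ℂ)‖ = 2 * Real.pi * |m| := by
    simp [abs_of_pos Real.pi_pos]
  have norm_numerator : ‖e (y * m) - e (x * m)‖ ≤ 2 :=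
    (norm_sub_le _ _).trans (by rw [norm_e, norm_e]; norm_num)
  calc ‖∫ α in x..y, e (α * m)‖ = ‖e (y * m) - e (x * m)‖ / (2 * Real.pi * |m|) := by
        simp_rw [e_eq_exp]
        rw [integral_exp_mul_complex denominator_ne_zero, norm_div, norm_denominator]
    _ ≤ 2 / (2 * |m|) := by
        gcongr
        nlinarith [Real.pi_gt_three]
    _ = |m|⁻¹ := by field_simp

theorem norm_integral_e_neg (x y m : ℝ) :
    ‖∫ α in x..y, e (α * -m)‖ = ‖∫ α in x..y, e (α * m)‖ := by
  simp only [mul_neg, ← conj_e]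
  rw [intervalIntegral.intervalIntegral_conj, RCLike.norm_conj]

section FiniteExponentialSums

variable {ι : Type*} (s : Finset ι) (a : ι → ℂ) (m : ι → ℝ)

theorem norm_sq_sum_e_eq (α : ℝ) :
    ((‖∑ i ∈ s, a i * e (α * m i)‖ ^ 2 : ℝ) : ℂ) =
      ∑ i ∈ s, ∑ j ∈ s, a i * conj (a j) * e (α * (m i - m j)) := by
  rw [Complex.ofReal_pow, ← Complex.mul_conj', map_sum, sum_mul_sum]
  refine sum_congr rfl fun i _ => sum_congr rfl fun j _ => ?_
  rw [mul_sub, sub_eq_add_neg, e_add, map_mul, conj_e]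
  ring

theorem integral_norm_sq_sum_e_eq (x y : ℝ) :
    ((∫ α in x..y, ‖∑ i ∈ s, a i * e (α * m i)‖ ^ 2 : ℝ) : ℂ) =
      ∑ i ∈ s, ∑ j ∈ s, a i * conj (a j) * ∫ α in x..y, e (α * (m i - m j)) := by
  rw [← intervalIntegral.integral_ofReal]
  simp_rw [norm_sq_sum_e_eq]
  rw [intervalIntegral.integral_finsetSum fun i _ =>
    Continuous.intervalIntegrable (by fun_prop) _ _]
  refine sum_congr rfl fun i _ => ?_
  rw [intervalIntegral.integral_finsetSum fun j _ =>
    Continuous.intervalIntegrable (by fun_prop) _ _]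
  exact sum_congr rfl fun j _ => intervalIntegral.integral_const_mul _ _

variable {s m}

/-- Schur's test: AM-GM on `‖a i‖ ‖a j‖` and the symmetry of `‖K‖` leave only row sums. -/
theorem norm_sum_sum_mul_conj_mul_le {K : ι → ι → ℂ} {B : ℝ}
    (norm_symm : ∀ i ∈ s, ∀ j ∈ s, ‖K i j‖ = ‖K j i‖)
    (row_le : ∀ i ∈ s, ∑ j ∈ s, ‖K i j‖ ≤ B) :
    ‖∑ i ∈ s, ∑ j ∈ s, a i * conj (a j) * K i j‖ ≤ B * ∑ i ∈ s, ‖a i‖ ^ 2 := by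
  calc ‖∑ i ∈ s, ∑ j ∈ s, a i * conj (a j) * K i j‖
      ≤ ∑ i ∈ s, ∑ j ∈ s, (‖a i‖ ^ 2 / 2 * ‖K i j‖ + ‖a j‖ ^ 2 / 2 * ‖K i j‖) := by
        refine norm_sum_le_of_le _ fun i _ => norm_sum_le_of_le _ fun j _ => ?_
        rw [norm_mul, norm_mul, RCLike.norm_conj, ← add_mul]
        gcongr
        linarith [two_mul_le_add_sq ‖a i‖ ‖a j‖]
    _ = ∑ i ∈ s, ‖a i‖ ^ 2 * ∑ j ∈ s, ‖K i j‖ := by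
        simp_rw [sum_add_distrib]
        rw [sum_comm (f := fun i j => ‖a j‖ ^ 2 / 2 * ‖K i j‖), ← sum_add_distrib]
        refine sum_congr rfl fun i hi => ?_
        rw [mul_sum, ← sum_add_distrib]
        refine sum_congr rfl fun j hj => ?_
        rw [norm_symm j hj i hi]
        ring
    _ ≤ ∑ i ∈ s, ‖a i‖ ^ 2 * B :=
        sum_le_sum fun i hi => mul_le_mul_of_nonneg_left (row_le i hi) (sq_nonneg _)
    _ = B * ∑ i ∈ s, ‖a i‖ ^ 2 := by rw [← sum_mul, mul_comm]

theorem integral_norm_sq_sum_e_le [DecidableEq ι] (hm : Set.InjOn m s) {x y H : ℝ} (hxy : x ≤ y)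
    (hH : ∀ i ∈ s, ∑ j ∈ s.erase i, |m i - m j|⁻¹ ≤ H) :
    ∫ α in x..y, ‖∑ i ∈ s, a i * e (α * m i)‖ ^ 2 ≤ (y - x + H) * ∑ i ∈ s, ‖a i‖ ^ 2 := by
  refine (Real.le_norm_self _).trans ?_
  rw [← Complex.norm_real, integral_norm_sq_sum_e_eq]
  refine norm_sum_sum_mul_conj_mul_le a (fun i _ j _ => ?_) fun i hi => ?_
  · rw [← norm_integral_e_neg, neg_sub]
  have diagonal : ‖∫ α in x..y, e (α * (m i - m i))‖ ≤ y - x := by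
    simpa [norm_e, abs_of_nonneg (sub_nonneg.2 hxy)] using
      intervalIntegral.norm_integral_le_of_norm_le_const (a := x) (b := y)
        (f := fun α => e (α * (m i - m i))) fun α _ => (norm_e _).le
  rw [← add_sum_erase s _ hi]
  refine add_le_add diagonal (le_trans (sum_le_sum fun j hj => ?_) (hH i hi))
  have hij : m i ≠ m j := fun h => (mem_erase.1 hj).1 (hm hi (mem_of_mem_erase hj) h).symm
  exact norm_integral_e_le_inv_abs x y (sub_ne_zero.2 hij)

end FiniteExponentialSums

section SeparatedFrequencies

/-- The term `j = n` contributes `0⁻¹ = 0`. -/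
theorem sum_range_inv_abs_sub (n k : ℕ) :
    ∑ j ∈ range (n + (k + 1)), |(n : ℝ) - j|⁻¹ = harmonic n + harmonic k := by
  have below : ∑ j ∈ range n, |(n : ℝ) - j|⁻¹ = harmonic n := by
    rw [← sum_range_reflect, harmonic, Rat.cast_sum]
    refine sum_congr rfl fun j hj => ?_
    have hcast : ((n - 1 - j : ℕ) : ℝ) = n - (j + 1) := by
      have := mem_range.1 hj
      rw [Nat.sub_sub, Nat.cast_sub (by lia)]
      push_cast
      ring
    rw [hcast, sub_sub_cancel, abs_of_nonneg (by positivity)]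
    push_cast
    rfl
  have above : ∑ j ∈ range (k + 1), |(n : ℝ) - (n + j : ℕ)|⁻¹ = harmonic k := by
    have cancel : ∀ j : ℕ, |(n : ℝ) - (n + j : ℕ)| = j := fun j => by simp
    simp only [cancel]
    rw [sum_range_succ', harmonic, Rat.cast_sum]
    simp
  rw [sum_range_add, below, above]

theorem sum_range_inv_abs_sub_le {n N : ℕ} (hn : n ≤ N) :
    ∑ j ∈ range (N + 1), |(n : ℝ) - j|⁻¹ ≤ 2 * harmonic N := by
  obtain ⟨k, rfl⟩ := Nat.exists_eq_add_of_le hn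
  rw [add_assoc, sum_range_inv_abs_sub, two_mul]
  exact add_le_add (harmonic_cast_mono hn) (harmonic_cast_mono (Nat.le_add_left k n))

theorem integral_norm_sq_sum_e_le_of_separated {N : ℕ} {s : Finset ℕ} (hs : s ⊆ range (N + 1))
    (a : ℕ → ℂ) {m : ℕ → ℝ} {δ : ℝ} (hδ : 0 < δ)
    (hm : ∀ n ∈ s, ∀ k ∈ s, δ * |(n : ℝ) - k| ≤ |m n - m k|) {x y : ℝ} (hxy : x ≤ y) :
    ∫ α in x..y, ‖∑ n ∈ s, a n * e (α * m n)‖ ^ 2 ≤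
      (y - x + 2 / δ * harmonic N) * ∑ n ∈ s, ‖a n‖ ^ 2 := by
  have dist_pos : ∀ {n k : ℕ}, k ≠ n → 0 < |(n : ℝ) - k| := fun h =>
    abs_pos.2 (sub_ne_zero.2 (Nat.cast_injective.ne h.symm))
  refine integral_norm_sq_sum_e_le a (fun n hn k hk hnk => ?_) hxy fun n hn => ?_
  · by_contra hne
    have := hm n hn k hk
    rw [hnk, sub_self, abs_zero] at this
    exact this.not_gt (mul_pos hδ (dist_pos (Ne.symm hne)))
  have hnN : n ≤ N := Nat.lt_succ_iff.1 (mem_range.1 (hs hn))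
  calc ∑ k ∈ s.erase n, |m n - m k|⁻¹
      ≤ ∑ k ∈ s.erase n, δ⁻¹ * |(n : ℝ) - k|⁻¹ := sum_le_sum fun k hk => by
        rw [← mul_inv]
        exact inv_anti₀ (mul_pos hδ (dist_pos (mem_erase.1 hk).1))
          (hm n hn k (mem_of_mem_erase hk))
    _ ≤ ∑ k ∈ range (N + 1), δ⁻¹ * |(n : ℝ) - k|⁻¹ :=
        sum_le_sum_of_subset_of_nonneg ((erase_subset _ _).trans hs) fun _ _ _ => by positivity
    _ ≤ δ⁻¹ * (2 * harmonic N) := by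
        rw [← mul_sum]
        gcongr
        exact sum_range_inv_abs_sub_le hnN
    _ = 2 / δ * harmonic N := by ring

end SeparatedFrequencies

end MeanSquare

/-! ### Separation of the values `⌊n ^ c⌋` -/

section FloorSeparation

theorem rpow_sub_one_mul_sub_le {x y c : ℝ} (hx : 0 ≤ x) (hxy : x ≤ y) (hc : 1 ≤ c) :
    y ^ (c - 1) * (y - x) ≤ y ^ c - x ^ c := by
  have rpow_eq : ∀ {z : ℝ}, 0 ≤ z → z ^ c = z ^ (c - 1) * z := fun hz => by
    rw [← Real.rpow_add_one' hz (by linarith), sub_add_cancel]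
  have rpow_mono : x ^ (c - 1) ≤ y ^ (c - 1) := Real.rpow_le_rpow hx hxy (by linarith)
  rw [rpow_eq hx, rpow_eq (hx.trans hxy), mul_sub]
  gcongr

/-- The two bounds `⌊v⌋ - ⌊u⌋ ≥ 1` and `⌊v⌋ - ⌊u⌋ ≥ v - u - 1` add up without rounding error. -/
theorem sub_le_two_mul_floor_sub_floor {u v : ℝ} (h : u + 1 ≤ v) :
    v - u ≤ 2 * ((⌊v⌋ : ℝ) - ⌊u⌋) := by
  have one_le_floor_sub : (⌊u⌋ : ℝ) + 1 ≤ ⌊v⌋ := by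
    exact_mod_cast (Int.floor_add_one u).symm.trans_le (Int.floor_le_floor h)
  linarith [Int.lt_floor_add_one v, Int.floor_le u]

theorem half_rpow_mul_abs_sub_le_abs_floor_sub {c y : ℝ} (hc : 1 ≤ c) (hy : 0 ≤ y) {n k : ℕ}
    (hn : y ≤ n) (hk : y ≤ k) :
    y ^ (c - 1) / 2 * |(n : ℝ) - k| ≤ |(⌊(n : ℝ) ^ c⌋ : ℝ) - ⌊(k : ℝ) ^ c⌋| := by
  wlog hkn : k ≤ n generalizing n k
  · rw [abs_sub_comm, abs_sub_comm (⌊(n : ℝ) ^ c⌋ : ℝ)]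
    exact this hk hn (le_of_not_ge hkn)
  obtain rfl | hkn := hkn.eq_or_lt
  · simp
  have gap : (1 : ℝ) ≤ n - k := by
    rw [le_sub_iff_add_le']
    exact_mod_cast hkn
  have increment := rpow_sub_one_mul_sub_le (Nat.cast_nonneg k) (Nat.cast_le.2 hkn.le) hc
  have one_le_rpow : (1 : ℝ) ≤ (n : ℝ) ^ (c - 1) :=
    Real.one_le_rpow (by exact_mod_cast Nat.one_le_of_lt hkn) (by linarith)
  have rpow_gap : (k : ℝ) ^ c + 1 ≤ (n : ℝ) ^ c := by nlinarith
  calc y ^ (c - 1) / 2 * |(n : ℝ) - k| = y ^ (c - 1) * (n - k) / 2 := by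
        rw [abs_of_nonneg (by linarith)]
        ring
    _ ≤ (n : ℝ) ^ (c - 1) * (n - k) / 2 := by gcongr
    _ ≤ ⌊(n : ℝ) ^ c⌋ - ⌊(k : ℝ) ^ c⌋ := by
        linarith [sub_le_two_mul_floor_sub_floor rpow_gap]
    _ ≤ |(⌊(n : ℝ) ^ c⌋ : ℝ) - ⌊(k : ℝ) ^ c⌋| := le_abs_self _

end FloorSeparation

/-! ### The coefficients of `L` -/

section SieveCoefficients

open Finset
open scoped ArithmeticFunction.sigma

/-- The primes `p` with `μ X < p ≤ X`. -/
noncomputable def primeWindow (μ X : ℝ) : Finset ℕ :=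
  {p ∈ range (⌊X⌋₊ + 1) | p.Prime ∧ μ * X < p}

/-- The divisor sum `∑ λ(d)` over `d ∣ n`, `d ≤ D`, that sieve weights attach to `n`. -/
noncomputable def sieveSum (D : ℝ) (lam : ℕ → ℝ) (n : ℕ) : ℝ :=
  ∑ d ∈ range (⌊D⌋₊ + 1) with d ∣ n, lam d

variable {c μ X D : ℝ} {lam : ℕ → ℝ}

theorem L_eq_sum_primeWindow (c μ X D : ℝ) (lam : ℕ → ℝ) (α : ℝ) :
    L c μ X D lam α = ∑ p ∈ primeWindow μ X,
      ((Real.log p * sieveSum D lam (p + 2) : ℝ) : ℂ) * e (α * ⌊(p : ℝ) ^ c⌋) := by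
  have filter_eq : ∀ d : ℕ,
      (range (⌊X⌋₊ + 1)).filter (fun p : ℕ => p.Prime ∧ μ * X < (p : ℝ) ∧ d ∣ p + 2) =
        (primeWindow μ X).filter fun p => d ∣ p + 2 := fun d => by
    simp only [primeWindow, filter_filter, and_assoc]
  simp_rw [L, filter_eq, sum_filter, mul_sum]
  rw [sum_comm]
  refine sum_congr rfl fun p _ => ?_
  simp only [sieveSum, sum_filter, mul_sum, sum_mul, Complex.ofReal_sum, Complex.ofReal_mul]
  refine sum_congr rfl fun d _ => ?_
  split_ifs
  · ring
  · simp

theorem abs_sieveSum_le_sigma_zero (hlam : ∀ d, |lam d| ≤ 1) {n : ℕ} (hn : n ≠ 0) :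
    |sieveSum D lam n| ≤ σ 0 n := by
  have filter_subset_divisors : {d ∈ range (⌊D⌋₊ + 1) | d ∣ n} ⊆ n.divisors := fun d hd =>
    Nat.mem_divisors.2 ⟨(mem_filter.1 hd).2, hn⟩
  calc |sieveSum D lam n| ≤ ∑ d ∈ range (⌊D⌋₊ + 1) with d ∣ n, |lam d| :=
        abs_sum_le_sum_abs _ _
    _ ≤ #{d ∈ range (⌊D⌋₊ + 1) | d ∣ n} := by
        simpa using sum_le_card_nsmul _ _ 1 fun d _ => hlam d
    _ ≤ σ 0 n := by
        rw [ArithmeticFunction.sigma_zero_apply]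
        exact_mod_cast card_le_card filter_subset_divisors

theorem sum_primeWindow_sigma_zero_sq_le (μ X : ℝ) :
    ∑ p ∈ primeWindow μ X, (σ 0 (p + 2) : ℝ) ^ 2 ≤
      (⌊X⌋₊ + 2 : ℕ) * (harmonic (⌊X⌋₊ + 2) : ℝ) ^ 3 := by
  have image_subset : (primeWindow μ X).map (addRightEmbedding 2) ⊆ Ioc 0 (⌊X⌋₊ + 2) := by
    intro n hn
    obtain ⟨p, hp, rfl⟩ := mem_map.1 hn
    have hpX := mem_range.1 (mem_filter.1 hp).1
    rw [addRightEmbedding_apply, mem_Ioc]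
    lia
  calc ∑ p ∈ primeWindow μ X, (σ 0 (p + 2) : ℝ) ^ 2
      = ∑ n ∈ (primeWindow μ X).map (addRightEmbedding 2), (σ 0 n : ℝ) ^ 2 := by
        simp only [sum_map, addRightEmbedding_apply]
    _ ≤ ∑ n ∈ Ioc 0 (⌊X⌋₊ + 2), (σ 0 n : ℝ) ^ 2 :=
        sum_le_sum_of_subset_of_nonneg image_subset fun _ _ _ => sq_nonneg _
    _ ≤ _ := sum_Ioc_sigma_zero_sq_le _

theorem one_le_log_of_three_le (hX : 3 ≤ X) : 1 ≤ Real.log X := by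
  rw [Real.le_log_iff_exp_le (by linarith)]
  linarith [Real.exp_one_lt_d9]

theorem harmonic_floor_add_two_le (hX : 3 ≤ X) :
    (harmonic (⌊X⌋₊ + 2) : ℝ) ≤ 3 * Real.log X := by
  have log_shift : Real.log (X + 2) ≤ 2 * Real.log X := by
    rw [← Nat.cast_ofNat (R := ℝ) (n := 2), ← Real.log_pow]
    exact Real.log_le_log (by positivity) (by push_cast; nlinarith)
  have harmonic_le := harmonic_floor_le_one_add_log (X + 2) (by linarith)
  rw [Nat.floor_add_ofNat (by linarith)] at harmonic_le
  linarith [one_le_log_of_three_le hX]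

theorem sum_primeWindow_sq_log_mul_sieveSum_le (hX : 3 ≤ X) (hlam : ∀ d, |lam d| ≤ 1) :
    ∑ p ∈ primeWindow μ X, (Real.log p * sieveSum D lam (p + 2)) ^ 2 ≤
      54 * X * Real.log X ^ 5 := by
  have coeff_sq_le : ∀ p ∈ primeWindow μ X, (Real.log p * sieveSum D lam (p + 2)) ^ 2 ≤
      Real.log X ^ 2 * (σ 0 (p + 2) : ℝ) ^ 2 := fun p hp => by
    obtain ⟨hp_range, hp_prime, -⟩ := mem_filter.1 hp
    have one_le_p : (1 : ℝ) ≤ p := by exact_mod_cast hp_prime.one_le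
    have p_le_X : (p : ℝ) ≤ X :=
      (Nat.le_floor_iff (by linarith)).1 (Nat.lt_succ_iff.1 (mem_range.1 hp_range))
    rw [mul_pow, ← sq_abs (sieveSum _ _ _)]
    gcongr
    exact abs_sieveSum_le_sigma_zero hlam (by lia)
  have count_le : ((⌊X⌋₊ + 2 : ℕ) : ℝ) ≤ 2 * X := by
    push_cast
    linarith [Nat.floor_le (show 0 ≤ X by linarith)]
  calc ∑ p ∈ primeWindow μ X, (Real.log p * sieveSum D lam (p + 2)) ^ 2
      ≤ Real.log X ^ 2 * ∑ p ∈ primeWindow μ X, (σ 0 (p + 2) : ℝ) ^ 2 := by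
        rw [mul_sum]
        exact sum_le_sum coeff_sq_le
    _ ≤ Real.log X ^ 2 * ((⌊X⌋₊ + 2 : ℕ) * (harmonic (⌊X⌋₊ + 2) : ℝ) ^ 3) := by
        gcongr
        exact sum_primeWindow_sigma_zero_sq_le μ X
    _ ≤ Real.log X ^ 2 * (2 * X * (3 * Real.log X) ^ 3) := by
        gcongr
        · exact pow_nonneg (harmonic_cast_nonneg _) 3
        · exact harmonic_cast_nonneg _
        · exact harmonic_floor_add_two_le hX
    _ = 54 * X * Real.log X ^ 5 := by ring

theorem integral_norm_sq_L_le (hc : 1 ≤ c) (hμX : 0 < μ * X) {x y : ℝ} (hxy : x ≤ y) :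
    ∫ α in x..y, ‖L c μ X D lam α‖ ^ 2 ≤
      (y - x + 4 / (μ * X) ^ (c - 1) * harmonic ⌊X⌋₊) *
        ∑ p ∈ primeWindow μ X, (Real.log p * sieveSum D lam (p + 2)) ^ 2 := by
  have lt_of_mem : ∀ p ∈ primeWindow μ X, μ * X < p := fun p hp => (mem_filter.1 hp).2.2
  have mean_square := integral_norm_sq_sum_e_le_of_separated
    (s := primeWindow μ X) (m := fun p => ⌊(p : ℝ) ^ c⌋) (filter_subset _ _)
    (fun p => ((Real.log p * sieveSum D lam (p + 2) : ℝ) : ℂ))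
    (half_pos (Real.rpow_pos_of_pos hμX (c - 1)))
    (fun n hn k hk => half_rpow_mul_abs_sub_le_abs_floor_sub hc hμX.le
      (lt_of_mem n hn).le (lt_of_mem k hk).le) hxy
  simp only [Complex.norm_real, Real.norm_eq_abs, sq_abs] at mean_square
  simp_rw [L_eq_sum_primeWindow]
  convert mean_square using 3
  ring

theorem two_mul_add_harmonic_le (hμ : 0 < μ) (hX : 3 ≤ X) {Δ : ℝ} (hΔ : Δ ≤ X ^ (1 - c)) :
    2 * Δ + 4 / (μ * X) ^ (c - 1) * harmonic ⌊X⌋₊ ≤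
      (2 + 8 / μ ^ (c - 1)) * (X ^ (1 - c) * Real.log X) := by
  have hX0 : 0 < X := by linarith
  have one_le_log := one_le_log_of_three_le hX
  have harmonic_le : (harmonic ⌊X⌋₊ : ℝ) ≤ 2 * Real.log X :=
    (harmonic_floor_le_one_add_log X (by linarith)).trans (by linarith)
  have length_le : Δ ≤ X ^ (1 - c) * Real.log X :=
    hΔ.trans (le_mul_of_one_le_right (by positivity) one_le_log)
  have inv_separation : 4 / (μ * X) ^ (c - 1) = 4 / μ ^ (c - 1) * X ^ (1 - c) := by
    rw [Real.mul_rpow hμ.le hX0.le, ← neg_sub c 1, Real.rpow_neg hX0.le]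
    field_simp
  calc 2 * Δ + 4 / (μ * X) ^ (c - 1) * harmonic ⌊X⌋₊
      ≤ 2 * (X ^ (1 - c) * Real.log X) +
          4 / μ ^ (c - 1) * X ^ (1 - c) * (2 * Real.log X) := by
        rw [inv_separation]
        gcongr
    _ = (2 + 8 / μ ^ (c - 1)) * (X ^ (1 - c) * Real.log X) := by ring

end SieveCoefficients

theorem stmt_5_general (c μ : ℝ) (hc : 1 ≤ c) (hμ : 0 < μ) :
    ∃ C : ℝ, 0 < C ∧
      ∀ X : ℝ, 3 ≤ X → ∀ D Δ : ℝ, 0 ≤ Δ → Δ ≤ X ^ (1 - c) →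
        ∀ lam : ℕ → ℝ, (∀ d, |lam d| ≤ 1) →
          (∫ α in (-Δ)..Δ, ‖L c μ X D lam α‖ ^ 2) ≤ C * X ^ (2 - c) * Real.log X ^ 6 := by
  refine ⟨54 * (2 + 8 / μ ^ (c - 1)), by positivity, fun X hX D Δ hΔ0 hΔ lam hlam => ?_⟩
  have hX0 : 0 < X := by linarith
  have rpow_split : X ^ (2 - c) = X * X ^ (1 - c) := by
    rw [show 2 - c = 1 + (1 - c) by ring, Real.rpow_add hX0, Real.rpow_one]
  have log_nonneg : 0 ≤ Real.log X := Real.log_nonneg (by linarith)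
  calc ∫ α in (-Δ)..Δ, ‖L c μ X D lam α‖ ^ 2
      ≤ (2 * Δ + 4 / (μ * X) ^ (c - 1) * harmonic ⌊X⌋₊) *
          ∑ p ∈ primeWindow μ X, (Real.log p * sieveSum D lam (p + 2)) ^ 2 :=
        (integral_norm_sq_L_le hc (by positivity) (by linarith)).trans_eq (by ring)
    _ ≤ (2 + 8 / μ ^ (c - 1)) * (X ^ (1 - c) * Real.log X) * (54 * X * Real.log X ^ 5) := by
        gcongr
        · exact two_mul_add_harmonic_le hμ hX hΔ
        · exact sum_primeWindow_sq_log_mul_sieveSum_le hX hlam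
    _ = 54 * (2 + 8 / μ ^ (c - 1)) * X ^ (2 - c) * Real.log X ^ 6 := by
        rw [rpow_split]
        ring

theorem stmt_5 (c μ : ℝ) (hc1 : 1 < c) (hc2 : c < 17 / 16) (hμ1 : 0 < μ) (hμ2 : μ < 1) :
    ∃ C : ℝ, 0 < C ∧
      ∀ X : ℝ, 3 ≤ X → ∀ D : ℝ, 2 ≤ D → D ≤ X → ∀ Δ : ℝ, 0 < Δ → Δ ≤ X ^ (1 - c) →
        ∀ lam : ℕ → ℝ, IsSieveWeight D lam →
          (∫ α in (-Δ)..Δ, ‖L c μ X D lam α‖ ^ 2) ≤ C * X ^ (2 - c) * Real.log X ^ 6 := by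
  obtain ⟨C, hC, hbound⟩ := stmt_5_general c μ hc1.le hμ1
  exact ⟨C, hC, fun X hX D _ _ Δ hΔ0 hΔ lam hlam => hbound X hX D Δ hΔ0.le hΔ lam hlam.1⟩
end

section
/- Let $c$ and $\mu$ be fixed real numbers with $1 < c < \frac{17}{16}$ and $0 < \mu < 1$. There exists a constant $C = C(c, \mu) > 0$ such that for every real $X \geq 3$ one has $\int_{-1}^{1} |I(\alpha)|^2 \, d\alpha \leq C X (\log X)^5$. -/
/-- `I(α) = ∫_{μX}^{X} e(α t^c) dt`. -/
noncomputable def I (c μ X : ℝ) (α : ℝ) : ℂ := ∫ t in (μ * X)..X, e (α * t ^ c)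

/-!
Substituting `u = t ^ c` exhibits `I(α)` as the inverse Fourier transform of the function
`|c|⁻¹ u ^ (1 / c - 1)` cut off to the image of `[μX, X]`. Plancherel's theorem then evaluates the
mean square over the whole line: it is
`|c|⁻¹ ∫_{μX}^{X} t ^ (1 - c) dt = |c|⁻¹ X ^ (2 - c) ∫_μ^1 t ^ (1 - c) dt`, which is `O(X)` as soon
as `c ≥ 1` and `X ≥ 1`.
-/

open MeasureTheory Set Function FourierTransform

section Plancherel

variable {E F : Type*} [NormedAddCommGroup E] [InnerProductSpace ℝ E] [FiniteDimensional ℝ E]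
  [MeasurableSpace E] [BorelSpace E] [NormedAddCommGroup F] [InnerProductSpace ℂ F] {f : E → F}

lemma continuous_fourier_of_integrable (hf : Integrable f) : Continuous (𝓕 f) :=
  VectorFourier.fourierIntegral_continuous Real.continuous_fourierChar continuous_inner hf

variable [CompleteSpace F]

lemma integral_smul_fourier_eq_integral_fourier_smul {g : E → ℂ} (hg : Integrable g)
    (hf : Integrable f) : ∫ x, g x • 𝓕 f x = ∫ x, 𝓕 g x • f x := by
  simpa using! (VectorFourier.integral_fourierIntegral_smul_eq_flip (L := innerₗ E)
    Real.continuous_fourierChar continuous_inner hg hf).symm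

-- Both sides have the same pairing with every Schwartz function: the left by the definition of
-- the Fourier transform of a tempered distribution, the right by Fubini.
theorem fourier_toLp_ae_eq (hf₁ : Integrable f) (hf₂ : MemLp f 2) :
    (𝓕 (hf₂.toLp f) : Lp F 2 (volume : Measure E)) =ᵐ[volume] 𝓕 f := by
  refine ae_eq_of_integral_contDiff_smul_eq ((Lp.memLp _).locallyIntegrable one_le_two)
    (continuous_fourier_of_integrable hf₁).locallyIntegrable fun g hg hgc ↦ ?_
  let φ : SchwartzMap E ℂ :=
    (hgc.comp_left rfl : HasCompactSupport (Complex.ofRealCLM ∘ g)).toSchwartzMap (by fun_prop)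
  have smul_eq (x : E) (v : F) : g x • v = φ x • v := by simp [φ]
  simp only [smul_eq]
  calc ∫ x, φ x • (𝓕 (hf₂.toLp f) : Lp F 2 (volume : Measure E)) x
      = ∫ x, (𝓕 φ) x • hf₂.toLp f x := by
        rw [← Lp.toTemperedDistribution_apply, ← Lp.fourier_toTemperedDistribution_eq,
          TemperedDistribution.fourier_apply, Lp.toTemperedDistribution_apply]
    _ = ∫ x, 𝓕 (φ : E → ℂ) x • f x := by
        refine integral_congr_ae ?_
        filter_upwards [hf₂.coeFn_toLp] with x hx
        rw [hx, SchwartzMap.fourier_coe]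
    _ = ∫ x, φ x • 𝓕 f x :=
        (integral_smul_fourier_eq_integral_fourier_smul φ.integrable hf₁).symm

theorem memLp_two_fourier (hf₁ : Integrable f) (hf₂ : MemLp f 2) : MemLp (𝓕 f) 2 :=
  (Lp.memLp _).ae_eq (fourier_toLp_ae_eq hf₁ hf₂)

theorem integral_norm_sq_fourier (hf₁ : Integrable f) (hf₂ : MemLp f 2) :
    ∫ ξ, ‖𝓕 f ξ‖ ^ 2 = ∫ x, ‖f x‖ ^ 2 := by
  have sq_norm_eq (g : Lp F 2 (volume : Measure E)) : ‖g‖ ^ 2 = ∫ x, ‖g x‖ ^ 2 := by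
    have h : ((‖g‖ ^ 2 : ℝ) : ℂ) = ((∫ x, ‖g x‖ ^ 2 : ℝ) : ℂ) := by
      rw [← integral_complex_ofReal]
      simpa [inner_self_eq_norm_sq_to_K] using L2.inner_def (𝕜 := ℂ) g g
    exact_mod_cast h
  calc ∫ ξ, ‖𝓕 f ξ‖ ^ 2
      = ‖𝓕 (hf₂.toLp f)‖ ^ 2 := by
        rw [sq_norm_eq]
        exact integral_congr_ae ((fourier_toLp_ae_eq hf₁ hf₂).symm.fun_comp (‖·‖ ^ 2))
    _ = ‖hf₂.toLp f‖ ^ 2 := by rw [Lp.norm_fourier_eq]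
    _ = ∫ x, ‖f x‖ ^ 2 := by
        rw [sq_norm_eq]
        exact integral_congr_ae (hf₂.coeFn_toLp.fun_comp (‖·‖ ^ 2))

theorem memLp_two_fourierInv (hf₁ : Integrable f) (hf₂ : MemLp f 2) : MemLp (𝓕⁻ f) 2 := by
  rw [Real.fourierInv_eq_fourier_comp_neg]
  exact memLp_two_fourier hf₁.comp_neg
    (hf₂.comp_measurePreserving (Measure.measurePreserving_neg volume))

theorem integral_norm_sq_fourierInv (hf₁ : Integrable f) (hf₂ : MemLp f 2) :
    ∫ ξ, ‖𝓕⁻ f ξ‖ ^ 2 = ∫ x, ‖f x‖ ^ 2 := by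
  simp only [Real.fourierInv_eq_fourier_neg]
  rw [integral_neg_eq_self (fun ξ ↦ ‖𝓕 f ξ‖ ^ 2), integral_norm_sq_fourier hf₁ hf₂]

end Plancherel

section PushforwardDensity

variable {F : Type*} [NormedAddCommGroup F] [NormedSpace ℝ F]

/-- The density of the pushforward under `φ` of the vector measure `A(t) dt` on `s`, where `φ` is
injective on `s` with nonvanishing derivative `φ'`. It is extended by zero outside `φ '' s`. -/
noncomputable def pushforwardDensity (φ φ' : ℝ → ℝ) (s : Set ℝ) (A : ℝ → F) : ℝ → F :=
  (φ '' s).indicator fun u ↦ |φ' (invFunOn φ s u)|⁻¹ • A (invFunOn φ s u)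

variable {φ φ' : ℝ → ℝ} {s : Set ℝ} {A : ℝ → F}

lemma pushforwardDensity_apply (hφ : InjOn φ s) {t : ℝ} (ht : t ∈ s) :
    pushforwardDensity φ φ' s A (φ t) = |φ' t|⁻¹ • A t := by
  rw [pushforwardDensity, indicator_of_mem (mem_image_of_mem φ ht), hφ.leftInvOn_invFunOn ht]

lemma comp_pushforwardDensity_eq_indicator {G : Type*} [Zero G] (Ψ : ℝ → F → G)
    (hΨ : ∀ u, Ψ u 0 = 0) :
    (fun u ↦ Ψ u (pushforwardDensity φ φ' s A u)) =
      (φ '' s).indicator fun u ↦ Ψ u (pushforwardDensity φ φ' s A u) := by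
  refine (indicator_eq_self.2 fun u hu ↦ by_contra fun hus ↦ hu ?_).symm
  rw [pushforwardDensity, indicator_of_notMem hus, hΨ]

lemma abs_smul_norm_inv_abs_smul_sq (r : ℝ) (v : F) :
    |r| • ‖|r|⁻¹ • v‖ ^ 2 = |r|⁻¹ * ‖v‖ ^ 2 := by
  rcases eq_or_ne r 0 with rfl | hr
  · simp
  · rw [norm_smul, norm_inv, Real.norm_eq_abs, abs_abs, smul_eq_mul]
    field_simp

variable (hs : MeasurableSet s) (hφ' : ∀ t ∈ s, HasDerivWithinAt φ (φ' t) s t) (hφ : InjOn φ s)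
include hs hφ' hφ

lemma integrable_comp_pushforwardDensity_iff {G : Type*} [NormedAddCommGroup G] [NormedSpace ℝ G]
    (Ψ : ℝ → F → G) (hΨ : ∀ u, Ψ u 0 = 0) :
    Integrable (fun u ↦ Ψ u (pushforwardDensity φ φ' s A u)) ↔
      IntegrableOn (fun t ↦ |φ' t| • Ψ (φ t) (|φ' t|⁻¹ • A t)) s := by
  have himage : MeasurableSet (φ '' s) :=
    measurable_image_of_fderivWithin hs (fun t ht ↦ (hφ' t ht).hasFDerivWithinAt) hφ
  rw [comp_pushforwardDensity_eq_indicator Ψ hΨ, integrable_indicator_iff himage,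
    integrableOn_image_iff_integrableOn_abs_deriv_smul hs hφ' hφ]
  exact integrableOn_congr_fun (fun t ht ↦ by simp only [pushforwardDensity_apply hφ ht]) hs

lemma integral_comp_pushforwardDensity {G : Type*} [NormedAddCommGroup G] [NormedSpace ℝ G]
    (Ψ : ℝ → F → G) (hΨ : ∀ u, Ψ u 0 = 0) :
    ∫ u, Ψ u (pushforwardDensity φ φ' s A u) =
      ∫ t in s, |φ' t| • Ψ (φ t) (|φ' t|⁻¹ • A t) := by
  have himage : MeasurableSet (φ '' s) :=
    measurable_image_of_fderivWithin hs (fun t ht ↦ (hφ' t ht).hasFDerivWithinAt) hφ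
  rw [comp_pushforwardDensity_eq_indicator Ψ hΨ, integral_indicator himage,
    integral_image_eq_integral_abs_deriv_smul hs hφ' hφ]
  exact setIntegral_congr_fun hs fun t ht ↦ by simp only [pushforwardDensity_apply hφ ht]

lemma integrable_norm_sq_pushforwardDensity_iff :
    Integrable (fun u ↦ ‖pushforwardDensity φ φ' s A u‖ ^ 2) ↔
      IntegrableOn (fun t ↦ |φ' t|⁻¹ * ‖A t‖ ^ 2) s := by
  rw [integrable_comp_pushforwardDensity_iff hs hφ' hφ (fun _ v ↦ ‖v‖ ^ 2) (by simp)]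
  simp only [abs_smul_norm_inv_abs_smul_sq]

lemma integral_norm_sq_pushforwardDensity :
    ∫ u, ‖pushforwardDensity φ φ' s A u‖ ^ 2 = ∫ t in s, |φ' t|⁻¹ * ‖A t‖ ^ 2 := by
  rw [integral_comp_pushforwardDensity hs hφ' hφ (fun _ v ↦ ‖v‖ ^ 2) (by simp)]
  simp only [abs_smul_norm_inv_abs_smul_sq]

lemma integrable_pushforwardDensity_iff (hφ'₀ : ∀ t ∈ s, φ' t ≠ 0) :
    Integrable (pushforwardDensity φ φ' s A) ↔ IntegrableOn A s := by
  rw [integrable_comp_pushforwardDensity_iff hs hφ' hφ (fun _ v ↦ v) fun _ ↦ rfl]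
  exact integrableOn_congr_fun (fun t ht ↦ smul_inv_smul₀ (abs_ne_zero.2 (hφ'₀ t ht)) _) hs

end PushforwardDensity

section OscillatoryIntegral

variable {F : Type*} [NormedAddCommGroup F] [InnerProductSpace ℂ F]
  {φ φ' : ℝ → ℝ} {s : Set ℝ} {A : ℝ → F}

lemma coe_fourierChar_eq_e (t : ℝ) : (Real.fourierChar t : ℂ) = e t := by
  rw [Real.fourierChar_apply, e]
  push_cast
  ring_nf

variable (hs : MeasurableSet s) (hφ' : ∀ t ∈ s, HasDerivWithinAt φ (φ' t) s t) (hφ : InjOn φ s)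
  (hφ'₀ : ∀ t ∈ s, φ' t ≠ 0)
include hs hφ' hφ hφ'₀

lemma fourierInv_pushforwardDensity (α : ℝ) :
    𝓕⁻ (pushforwardDensity φ φ' s A) α = ∫ t in s, e (α * φ t) • A t := by
  rw [Real.fourierInv_eq, integral_comp_pushforwardDensity hs hφ' hφ
    (fun u v ↦ Real.fourierChar (inner ℝ u α) • v) fun u ↦ smul_zero _]
  refine setIntegral_congr_fun hs fun t ht ↦ ?_
  simp only [Circle.smul_def, coe_fourierChar_eq_e, RCLike.inner_apply, conj_trivial]
  rw [smul_comm, smul_inv_smul₀ (abs_ne_zero.2 (hφ'₀ t ht))]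

theorem plancherel_oscillatoryIntegral [CompleteSpace F] (hA : IntegrableOn A s)
    (hA₂ : IntegrableOn (fun t ↦ |φ' t|⁻¹ * ‖A t‖ ^ 2) s) :
    Integrable (fun α : ℝ ↦ ‖∫ t in s, e (α * φ t) • A t‖ ^ 2) ∧
      ∫ α : ℝ, ‖∫ t in s, e (α * φ t) • A t‖ ^ 2 = ∫ t in s, |φ' t|⁻¹ * ‖A t‖ ^ 2 := by
  have hdens : Integrable (pushforwardDensity φ φ' s A) :=
    (integrable_pushforwardDensity_iff hs hφ' hφ hφ'₀).2 hA
  have hdens₂ : MemLp (pushforwardDensity φ φ' s A) 2 :=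
    (memLp_two_iff_integrable_sq_norm hdens.1).2
      ((integrable_norm_sq_pushforwardDensity_iff hs hφ' hφ).2 hA₂)
  simp only [← fourierInv_pushforwardDensity hs hφ' hφ hφ'₀]
  exact ⟨(memLp_two_fourierInv hdens hdens₂).integrable_norm_pow two_ne_zero,
    (integral_norm_sq_fourierInv hdens hdens₂).trans
      (integral_norm_sq_pushforwardDensity hs hφ' hφ)⟩

end OscillatoryIntegral

section PowerPhase

variable {c : ℝ}

lemma injOn_rpow_const_Ioi (hc : c ≠ 0) : InjOn (fun t : ℝ ↦ t ^ c) (Ioi 0) :=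
  fun _ ht _ hu h ↦ (Real.rpow_left_inj (mem_Ioi.1 ht).le (mem_Ioi.1 hu).le hc).1 h

lemma inv_abs_mul_rpow_sub_one (c : ℝ) {t : ℝ} (ht : 0 < t) :
    |c * t ^ (c - 1)|⁻¹ = |c|⁻¹ * t ^ (1 - c) := by
  rw [abs_mul, abs_of_pos (Real.rpow_pos_of_pos ht _), mul_inv, ← Real.rpow_neg ht.le, neg_sub]

lemma intervalIntegrable_rpow_of_pos {a b : ℝ} (p : ℝ) (ha : 0 < a) (hb : 0 < b) :
    IntervalIntegrable (fun t : ℝ ↦ t ^ p) volume a b :=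
  intervalIntegral.intervalIntegrable_rpow (.inr (notMem_uIcc_of_lt ha hb))

theorem plancherel_integral_e_mul_rpow (hc : c ≠ 0) {a b : ℝ} (ha : 0 < a) (hab : a ≤ b) :
    Integrable (fun α : ℝ ↦ ‖∫ t in a..b, e (α * t ^ c)‖ ^ 2) ∧
      ∫ α : ℝ, ‖∫ t in a..b, e (α * t ^ c)‖ ^ 2 = |c|⁻¹ * ∫ t in a..b, t ^ (1 - c) := by
  have hpos (t : ℝ) (ht : t ∈ Ioc a b) : 0 < t := ha.trans ht.1
  have hderiv (t : ℝ) (ht : t ∈ Ioc a b) :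
      HasDerivWithinAt (fun t ↦ t ^ c) (c * t ^ (c - 1)) (Ioc a b) t :=
    (Real.hasDerivAt_rpow_const (.inl (hpos t ht).ne')).hasDerivWithinAt
  have hderiv₀ (t : ℝ) (ht : t ∈ Ioc a b) : c * t ^ (c - 1) ≠ 0 :=
    mul_ne_zero hc (Real.rpow_pos_of_pos (hpos t ht) _).ne'
  have hweight : EqOn (fun t ↦ |c * t ^ (c - 1)|⁻¹ * ‖(1 : ℂ)‖ ^ 2)
      (fun t ↦ |c|⁻¹ * t ^ (1 - c)) (Ioc a b) := fun t ht ↦ by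
    simp only [inv_abs_mul_rpow_sub_one c (hpos t ht), norm_one, one_pow, mul_one]
  have hweight_int : IntegrableOn (fun t ↦ |c|⁻¹ * t ^ (1 - c)) (Ioc a b) :=
    (intervalIntegrable_rpow_of_pos _ ha (ha.trans_le hab)).1.const_mul _
  have h := plancherel_oscillatoryIntegral (A := fun _ ↦ (1 : ℂ)) measurableSet_Ioc hderiv
    ((injOn_rpow_const_Ioi hc).mono hpos) hderiv₀ (integrableOn_const (by simp))
    (hweight_int.congr_fun hweight.symm measurableSet_Ioc)
  rw [setIntegral_congr_fun measurableSet_Ioc hweight, integral_const_mul] at h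
  simpa only [intervalIntegral.integral_of_le hab, smul_eq_mul, mul_one] using h

lemma integral_rpow_mul_right {a b X : ℝ} (p : ℝ) (ha : 0 < a) (hb : 0 < b) (hX : 0 < X) :
    ∫ t in (a * X)..(b * X), t ^ p = (∫ t in a..b, t ^ p) * X ^ (p + 1) := by
  have hscale : EqOn (fun t ↦ (t * X) ^ p) (fun t ↦ t ^ p * X ^ p) (uIcc a b) := fun t ht ↦
    Real.mul_rpow ((lt_min ha hb).trans_le ht.1).le hX.le
  calc ∫ t in (a * X)..(b * X), t ^ p
      = X • ∫ t in a..b, (t * X) ^ p :=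
        (intervalIntegral.smul_integral_comp_mul_right (fun t ↦ t ^ p) X).symm
    _ = (∫ t in a..b, t ^ p) * X ^ (p + 1) := by
        rw [intervalIntegral.integral_congr hscale, intervalIntegral.integral_mul_const,
          Real.rpow_add_one hX.ne', smul_eq_mul]
        ring

lemma intervalIntegral_le_integral_of_nonneg {f : ℝ → ℝ} {a b : ℝ} (hab : a ≤ b)
    (hf : Integrable f) (hf₀ : 0 ≤ f) : ∫ x in a..b, f x ≤ ∫ x, f x := by
  rw [intervalIntegral.integral_of_le hab]
  exact setIntegral_le_integral hf (.of_forall hf₀)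

lemma rpow_two_sub_le_mul_log_pow (hc : 1 ≤ c) {X : ℝ} (hX : 3 ≤ X) (n : ℕ) :
    X ^ (2 - c) ≤ X * Real.log X ^ n := by
  have hlog : 1 ≤ Real.log X := by
    rw [Real.le_log_iff_exp_le (by linarith)]
    linarith [Real.exp_one_lt_three]
  calc X ^ (2 - c) ≤ X ^ (1 : ℝ) := Real.rpow_le_rpow_of_exponent_le (by linarith) (by linarith)
    _ = X := Real.rpow_one X
    _ ≤ X * Real.log X ^ n := le_mul_of_one_le_right (by linarith) (one_le_pow₀ hlog)

end PowerPhase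

theorem stmt_7_general (c μ : ℝ) (hc : c ≠ 0) (hμ0 : 0 < μ) (hμ1 : μ < 1) :
    ∃ C : ℝ, 0 < C ∧
      ∀ X : ℝ, 0 < X →
        Integrable (fun α ↦ ‖I c μ X α‖ ^ 2) ∧ ∫ α, ‖I c μ X α‖ ^ 2 = C * X ^ (2 - c) := by
  have hC : 0 < ∫ t in μ..1, t ^ (1 - c) :=
    intervalIntegral.intervalIntegral_pos_of_pos_on (intervalIntegrable_rpow_of_pos _ hμ0 one_pos)
      (fun t ht ↦ Real.rpow_pos_of_pos (hμ0.trans ht.1) _) hμ1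
  refine ⟨|c|⁻¹ * ∫ t in μ..1, t ^ (1 - c), by positivity, fun X hX ↦ ?_⟩
  obtain ⟨hint, heq⟩ := plancherel_integral_e_mul_rpow hc (mul_pos hμ0 hX)
    (mul_le_of_le_one_left hX.le hμ1.le)
  have hscale : ∫ t in (μ * X)..X, t ^ (1 - c) = (∫ t in μ..1, t ^ (1 - c)) * X ^ (2 - c) := by
    convert! integral_rpow_mul_right (1 - c) hμ0 one_pos hX using 2 <;> ring_nf
  exact ⟨hint, by rw [mul_assoc, ← hscale]; exact heq⟩

theorem stmt_7 (c μ : ℝ) (hc1 : 1 < c) (hc2 : c < 17 / 16) (hμ1 : 0 < μ) (hμ2 : μ < 1) :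
    ∃ C : ℝ, 0 < C ∧
      ∀ X : ℝ, 3 ≤ X →
        (∫ α in (-1 : ℝ)..1, ‖I c μ X α‖ ^ 2) ≤ C * X * Real.log X ^ 5 := by
  obtain ⟨C, hC, hmean⟩ := stmt_7_general c μ (zero_lt_one.trans hc1).ne' hμ1 hμ2
  refine ⟨C, hC, fun X hX ↦ ?_⟩
  obtain ⟨hint, heq⟩ := hmean X (by linarith)
  calc ∫ α in (-1 : ℝ)..1, ‖I c μ X α‖ ^ 2
      ≤ ∫ α, ‖I c μ X α‖ ^ 2 :=
        intervalIntegral_le_integral_of_nonneg (by norm_num) hint fun _ ↦ sq_nonneg _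
    _ = C * X ^ (2 - c) := heq
    _ ≤ C * (X * Real.log X ^ 5) := by gcongr; exact rpow_two_sub_le_mul_log_pow hc1.le hX 5
    _ = C * X * Real.log X ^ 5 := (mul_assoc _ _ _).symm
end
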